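/- Let N_T ≥ 1, K ≥ 0, N > K, and m ≥ 0 be natural numbers with N² > K² + m, let h_1,…,h_K ∈ ℂ^{N_T}, and let A_1,…,A_m ∈ ℂ^{N_T×N_T} be Hermitian matrices. Suppose V̂ = [v̂_1,…,v̂_K, V̂_s] ∈ ℂ^{N_T×N} (so V̂_s has N−K columns) satisfies h_k^H V̂_s = 0 for every k. Then there exist a natural number N' with K ≤ N' < N, matrices U_c ∈ ℂ^{(N−K)×K} and U_s ∈ ℂ^{(N−K)×(N'−K)}, such that the matrix V' = V̂ U ∈ ℂ^{N_T×N'}, where U is the N×N' block matrix with top-left block I_K, top-right block 0, bottom-left block U_c and bottom-right block U_s, satisfies: (i) Tr(A_i V' V'^H) = Tr(A_i V̂ V̂^H) for all i = 1,…,m; (ii) h_k^H v'_j = h_k^H v̂_j for all k and all j = 1,…,K, and h_k^H V'_s = 0 for all k, where V' = [v'_1,…,v'_K, V'_s]. In particular V' has strictly fewer columns than V̂ and attains exactly the same NIC-SINR values and the same quadratic sensing quantities. -/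

import Mathlib

open Matrix Finset

noncomputable section

/-- Transmit covariance `V Vᴴ` of the beamforming matrix `V = [v₁,…,v_K, V_s]`
with communication beams `v k` and sensing block `Vs`. -/
def totalCov {nT K Ns : ℕ} (v : Fin K → (Fin nT → ℂ))
    (Vs : Matrix (Fin nT) (Fin Ns) ℂ) : Matrix (Fin nT) (Fin nT) ℂ :=
  (∑ k, Matrix.vecMulVec (v k) (star (v k))) + Vs * Vsᴴ

open scoped ComplexOrder in
lemma exists_shift_psd_singular {n : Type*} [Fintype n] [DecidableEq n]
    (D : Matrix n n ℂ) (hD : D.IsHermitian) (h0 : D ≠ 0) :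
    ∃ t : ℝ, (1 + (t : ℂ) • D).PosSemidef ∧ (1 + (t : ℂ) • D).det = 0 := by
  have hne : hD.eigenvalues ≠ 0 := fun h => h0 (hD.eigenvalues_eq_zero_iff.mp h)
  obtain ⟨j0, hj0⟩ := Function.ne_iff.mp hne
  obtain ⟨j, -, hj⟩ := Finset.exists_max_image Finset.univ (fun i => |hD.eigenvalues i|)
    ⟨j0, Finset.mem_univ _⟩
  have hpos : 0 < |hD.eigenvalues j| :=
    lt_of_lt_of_le (abs_pos.mpr hj0) (hj j0 (Finset.mem_univ _))
  have hjne : hD.eigenvalues j ≠ 0 := abs_pos.mp hpos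
  set t : ℝ := -(hD.eigenvalues j)⁻¹ with ht
  set U : Matrix n n ℂ := (hD.eigenvectorUnitary : Matrix n n ℂ) with hU
  have hUU : U * Uᴴ = 1 := Unitary.coe_mul_star_self hD.eigenvectorUnitary
  have hsp : D = U * diagonal (fun i => (hD.eigenvalues i : ℂ)) * Uᴴ := by
    have := hD.spectral_theorem
    rw [Unitary.conjStarAlgAut_apply] at this
    exact this
  have key : 1 + (t : ℂ) • D
      = U * diagonal (fun i => ((1 + t * hD.eigenvalues i : ℝ) : ℂ)) * Uᴴ := by
    have : diagonal (fun i => ((1 + t * hD.eigenvalues i : ℝ) : ℂ))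
        = 1 + (t : ℂ) • diagonal (fun i => (hD.eigenvalues i : ℂ)) := by
      ext a b
      by_cases hab : a = b
      · subst hab; simp
      · simp [hab]
    rw [this, Matrix.mul_add, Matrix.add_mul, Matrix.mul_one, hUU, Matrix.mul_smul,
      Matrix.smul_mul, ← hsp]
  refine ⟨t, ?_, ?_⟩
  · rw [key]
    apply Matrix.PosSemidef.mul_mul_conjTranspose_same
    rw [posSemidef_diagonal_iff]
    intro i
    have h1 : |t * hD.eigenvalues i| ≤ 1 := by
      rw [ht, abs_mul, abs_neg, abs_inv, inv_mul_le_iff₀ hpos, mul_one]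
      exact hj i (Finset.mem_univ _)
    have := (abs_le.mp h1).1
    exact Complex.zero_le_real.mpr (by linarith)
  · rw [key, det_mul, det_mul, det_diagonal,
      Finset.prod_eq_zero (Finset.mem_univ j), mul_zero, zero_mul]
    have : 1 + t * hD.eigenvalues j = 0 := by rw [ht]; field_simp; ring
    rw [this]; simp

open scoped ComplexOrder in
lemma exists_factor {M M' : ℕ} (hM : M = M' + 1) (S : Matrix (Fin M) (Fin M) ℂ)
    (hS : S.PosSemidef) (hdet : S.det = 0) :
    ∃ W : Matrix (Fin M) (Fin M') ℂ, W * Wᴴ = S := by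
  subst hM
  have hH := hS.isHermitian
  have hd := hH.det_eq_prod_eigenvalues
  rw [hdet] at hd
  obtain ⟨j, -, hj⟩ := Finset.prod_eq_zero_iff.mp hd.symm
  have hj' : hH.eigenvalues j = 0 := by simpa using hj
  set U : Matrix (Fin (M'+1)) (Fin (M'+1)) ℂ := (hH.eigenvectorUnitary : Matrix (Fin (M'+1)) (Fin (M'+1)) ℂ) with hU
  have hsp : S = U * diagonal (fun i => (hH.eigenvalues i : ℂ)) * Uᴴ := by
    have := hH.spectral_theorem
    rw [Unitary.conjStarAlgAut_apply] at this
    exact this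
  refine ⟨Matrix.of fun a b => U a (j.succAbove b) * (Real.sqrt (hH.eigenvalues (j.succAbove b)) : ℂ), ?_⟩
  conv_rhs => rw [hsp]
  ext a b
  rw [Matrix.mul_apply, Matrix.mul_apply]
  simp only [mul_diagonal, conjTranspose_apply, of_apply]
  rw [Fin.sum_univ_succAbove _ j, hj']
  simp only [Complex.ofReal_zero, mul_zero, zero_mul, zero_add]
  refine Finset.sum_congr rfl fun i _ => ?_
  have hsq : (Real.sqrt (hH.eigenvalues (j.succAbove i)) : ℂ) *
      (Real.sqrt (hH.eigenvalues (j.succAbove i)) : ℂ) = (hH.eigenvalues (j.succAbove i) : ℂ) := by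
    rw [← Complex.ofReal_mul, Real.mul_self_sqrt (hS.eigenvalues_nonneg _)]
  rw [star_mul', ← hsq]
  simp only [Complex.star_def, Complex.conj_ofReal]
  ring

/-- real-linear parametrisation of Hermitian matrices by real matrices -/
def hermParam {M : ℕ} : Matrix (Fin M) (Fin M) ℝ →ₗ[ℝ] Matrix (Fin M) (Fin M) ℂ where
  toFun X := Matrix.of fun i j => ((X i j + X j i : ℝ) : ℂ) + ((X i j - X j i : ℝ) : ℂ) * Complex.I
  map_add' X Y := by ext i j; simp; ring
  map_smul' c X := by ext i j; simp; ring

lemma hermParam_herm {M : ℕ} (X : Matrix (Fin M) (Fin M) ℝ) : (hermParam X).IsHermitian := by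
  ext i j
  simp [hermParam]
  ring

lemma hermParam_inj {M : ℕ} (X : Matrix (Fin M) (Fin M) ℝ) (h : hermParam X = 0) : X = 0 := by
  ext i j
  have h1 := congrFun (congrFun h i) j
  have h2 := congrArg Complex.re h1
  have h3 := congrArg Complex.im h1
  simp [hermParam] at h2 h3
  simp only [Matrix.zero_apply]
  linarith

/-- first-order perturbation of the covariance -/
def pert {NT K M : ℕ} (Vc : Matrix (Fin NT) (Fin K) ℂ) (Vs : Matrix (Fin NT) (Fin M) ℂ)
    (B : Matrix (Fin M) (Fin K) ℂ) (D : Matrix (Fin M) (Fin M) ℂ) : Matrix (Fin NT) (Fin NT) ℂ :=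
  Vc * Bᴴ * Vsᴴ + Vs * B * Vcᴴ + Vs * D * Vsᴴ

lemma pert_herm {NT K M : ℕ} (Vc : Matrix (Fin NT) (Fin K) ℂ) (Vs : Matrix (Fin NT) (Fin M) ℂ)
    (B : Matrix (Fin M) (Fin K) ℂ) (D : Matrix (Fin M) (Fin M) ℂ) (hD : D.IsHermitian) :
    (pert Vc Vs B D).IsHermitian := by
  unfold pert Matrix.IsHermitian
  simp only [conjTranspose_add, conjTranspose_mul, conjTranspose_conjTranspose, hD.eq,
    Matrix.mul_assoc]
  abel

lemma trace_mul_eq_re {n : ℕ} (A P : Matrix (Fin n) (Fin n) ℂ) (hA : A.IsHermitian)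
    (hP : P.IsHermitian) (h : (Matrix.trace (A * P)).re = 0) : Matrix.trace (A * P) = 0 := by
  have h1 : star (Matrix.trace (A * P)) = Matrix.trace (A * P) := by
    rw [← trace_conjTranspose, conjTranspose_mul, hA.eq, hP.eq, trace_mul_comm]
  apply Complex.ext h
  exact Complex.conj_eq_iff_im.mp h1

lemma exists_pert {NT K M m : ℕ} (hc : m < 2 * (M * K) + M * M)
    (A : Fin m → Matrix (Fin NT) (Fin NT) ℂ) (hA : ∀ i, (A i).IsHermitian)
    (Vc : Matrix (Fin NT) (Fin K) ℂ) (Vs : Matrix (Fin NT) (Fin M) ℂ) :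
    ∃ (B : Matrix (Fin M) (Fin K) ℂ) (D : Matrix (Fin M) (Fin M) ℂ), D.IsHermitian ∧
      (B ≠ 0 ∨ D ≠ 0) ∧ ∀ i, Matrix.trace (A i * pert Vc Vs B D) = 0 := by
  let L : (Matrix (Fin M) (Fin K) ℂ × Matrix (Fin M) (Fin M) ℝ) →ₗ[ℝ] (Fin m → ℝ) :=
    { toFun := fun p i => (Matrix.trace (A i * pert Vc Vs p.1 (hermParam p.2))).re
      map_add' := by
        intro p q
        ext i
        have : pert Vc Vs (p + q).1 (hermParam (p + q).2)
            = pert Vc Vs p.1 (hermParam p.2) + pert Vc Vs q.1 (hermParam q.2) := by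
          simp only [pert, Prod.fst_add, Prod.snd_add, map_add, conjTranspose_add,
            Matrix.mul_add, Matrix.add_mul]
          abel
        simp only [this, Matrix.mul_add, trace_add, Complex.add_re, Pi.add_apply]
      map_smul' := by
        intro c p
        ext i
        have : pert Vc Vs (c • p).1 (hermParam (c • p).2)
            = c • pert Vc Vs p.1 (hermParam p.2) := by
          simp only [pert, Prod.smul_fst, Prod.smul_snd, map_smul, conjTranspose_smul,
            Matrix.mul_smul, Matrix.smul_mul, smul_add, star_trivial]
        simp only [this, Matrix.mul_smul, trace_smul, Complex.smul_re, Pi.smul_apply,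
          RingHom.id_apply] }
  have hlt : Module.finrank ℝ (Fin m → ℝ)
      < Module.finrank ℝ (Matrix (Fin M) (Fin K) ℂ × Matrix (Fin M) (Fin M) ℝ) := by
    rw [Module.finrank_prod, Module.finrank_matrix, Module.finrank_matrix,
      Complex.finrank_real_complex]
    simp
    linarith
  obtain ⟨p, hp, hp0⟩ := (Submodule.ne_bot_iff _).mp (LinearMap.ker_ne_bot_of_finrank_lt (f := L) hlt)
  refine ⟨p.1, hermParam p.2, hermParam_herm _, ?_, fun i => ?_⟩
  · by_contra hcon
    push Not at hcon
    exact hp0 (Prod.ext hcon.1 (hermParam_inj _ hcon.2))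
  · exact trace_mul_eq_re _ _ (hA i) (pert_herm _ _ _ _ (hermParam_herm _))
      (congrFun (LinearMap.mem_ker.mp hp) i)

lemma totalCov_eq {NT K M : ℕ} (v : Fin K → (Fin NT → ℂ)) (Vs : Matrix (Fin NT) (Fin M) ℂ) :
    totalCov v Vs = (Matrix.of fun i k => v k i) * (Matrix.of fun i k => v k i)ᴴ + Vs * Vsᴴ := by
  unfold totalCov
  congr 1
  ext a b
  simp [Matrix.sum_apply, vecMulVec_apply, Matrix.mul_apply]

open scoped ComplexOrder in
lemma core {NT K M M' m : ℕ} (hM : M = M' + 1) (hc : m < 2 * (M * K) + M * M)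
    (A : Fin m → Matrix (Fin NT) (Fin NT) ℂ) (hA : ∀ i, (A i).IsHermitian)
    (v : Fin K → (Fin NT → ℂ)) (Vs : Matrix (Fin NT) (Fin M) ℂ) :
    ∃ (Uc : Matrix (Fin M) (Fin K) ℂ) (Us : Matrix (Fin M) (Fin M') ℂ), ∀ i,
      Matrix.trace (A i * totalCov (fun k => v k + Vs *ᵥ (fun j => Uc j k)) (Vs * Us))
        = Matrix.trace (A i * totalCov v Vs) := by
  set Vc : Matrix (Fin NT) (Fin K) ℂ := Matrix.of fun i k => v k i with hVc
  obtain ⟨B, D, hD, hne, htr⟩ := exists_pert hc A hA Vc Vs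
  have hΔ : (fromBlocks (0 : Matrix (Fin K) (Fin K) ℂ) Bᴴ B D).IsHermitian := by
    rw [Matrix.IsHermitian, fromBlocks_conjTranspose, hD.eq]
    simp
  obtain ⟨t, hps, hdet⟩ := exists_shift_psd_singular _ hΔ (by
    intro h
    rw [← fromBlocks_zero, fromBlocks_inj] at h
    rcases hne with h1 | h1
    · exact h1 h.2.2.1
    · exact h1 h.2.2.2)
  have hb : 1 + (t : ℂ) • fromBlocks (0 : Matrix (Fin K) (Fin K) ℂ) Bᴴ B D
      = fromBlocks 1 ((t : ℂ) • B)ᴴ ((t : ℂ) • B) (1 + (t : ℂ) • D) := by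
    rw [← fromBlocks_one, fromBlocks_smul, fromBlocks_add]
    simp [conjTranspose_smul]
  rw [hb] at hps hdet
  rw [det_fromBlocks_one₁₁] at hdet
  set C := (t : ℂ) • B with hC
  have hps2 : (1 + (t : ℂ) • D - C * Cᴴ).PosSemidef := by
    haveI : Invertible (1 : Matrix (Fin K) (Fin K) ℂ) := invertibleOne
    have := (Matrix.PosDef.fromBlocks₁₁ (A := (1 : Matrix (Fin K) (Fin K) ℂ)) Cᴴ
      (1 + (t : ℂ) • D) Matrix.PosDef.one).mp (by rw [conjTranspose_conjTranspose]; exact hps)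
    simpa using this
  obtain ⟨W, hW⟩ := exists_factor hM _ hps2 hdet
  refine ⟨C, W, fun i => ?_⟩
  rw [totalCov_eq, totalCov_eq]
  have e1 : (Matrix.of fun i k => (v k + Vs *ᵥ (fun j => C j k)) i) = Vc + Vs * C := by
    ext a b
    simp [hVc, Matrix.mul_apply, mulVec, dotProduct]
  have e2 : (Vc + Vs * C) * (Vc + Vs * C)ᴴ + (Vs * W) * (Vs * W)ᴴ
      = (Vc * Vcᴴ + Vs * Vsᴴ) + (t : ℂ) • pert Vc Vs B D := by
    have : (Vs * W) * (Vs * W)ᴴ = Vs * (1 + (t : ℂ) • D - C * Cᴴ) * Vsᴴ := by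
      rw [← hW, conjTranspose_mul]; simp only [Matrix.mul_assoc]
    rw [this, hC]
    simp only [pert, conjTranspose_add, conjTranspose_mul, conjTranspose_smul, Matrix.mul_add,
      Matrix.add_mul, Matrix.mul_sub, Matrix.sub_mul, Matrix.mul_smul, Matrix.smul_mul,
      Matrix.mul_one, smul_add, Matrix.mul_assoc, Complex.star_def, Complex.conj_ofReal]
    abel
  rw [e1, e2, Matrix.mul_add, trace_add, Matrix.mul_smul, trace_smul, htr i]
  simp [hVc]

/-- Rank-reduction transformation step for the no-interference-cancellation case:
if `N² > K² + m` and the sensing block is orthogonal to all communication channels,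
the total number of beamformers can be strictly reduced by a lower-block-triangular
transformation `U = [[I_K, 0], [U_c, U_s]]`, preserving the `m` quadratic sensing
quantities, all the inner products `h_kᴴ v_j`, and the orthogonality of the sensing
block to the channels (hence the NIC-SINR values). -/
theorem rank_reduction_step_NIC
    (NT K N m : ℕ) (hNT : 1 ≤ NT) (hKN : K < N) (hcount : K ^ 2 + m < N ^ 2)
    (h : Fin K → (Fin NT → ℂ))
    (A : Fin m → Matrix (Fin NT) (Fin NT) ℂ) (hA : ∀ i, (A i).IsHermitian)
    (vhat : Fin K → (Fin NT → ℂ)) (Vshat : Matrix (Fin NT) (Fin (N - K)) ℂ)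
    (horth : ∀ k : Fin K, star (h k) ᵥ* Vshat = 0) :
    ∃ N' : ℕ, K ≤ N' ∧ N' < N ∧
      ∃ (Uc : Matrix (Fin (N - K)) (Fin K) ℂ) (Us : Matrix (Fin (N - K)) (Fin (N' - K)) ℂ),
        (∀ i : Fin m,
          Matrix.trace (A i *
              totalCov (fun k => vhat k + Vshat *ᵥ (fun j => Uc j k)) (Vshat * Us))
            = Matrix.trace (A i * totalCov vhat Vshat)) ∧
        (∀ (k : Fin K) (j : Fin K),
          star (h k) ⬝ᵥ (vhat j + Vshat *ᵥ (fun i => Uc i j)) = star (h k) ⬝ᵥ vhat j) ∧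
        (∀ k : Fin K, star (h k) ᵥ* (Vshat * Us) = 0) := by
  have hM : N - K = (N - 1 - K) + 1 := by omega
  have hc : m < 2 * ((N - K) * K) + (N - K) * (N - K) := by
    obtain ⟨d, rfl⟩ := Nat.exists_eq_add_of_lt hKN
    have : K + d + 1 - K = d + 1 := by omega
    rw [this]
    nlinarith
  obtain ⟨Uc, Us, hU⟩ := core hM hc A hA vhat Vshat
  refine ⟨N - 1, by omega, by omega, Uc, Us, hU, fun k j => ?_, fun k => ?_⟩
  · rw [dotProduct_add, dotProduct_mulVec, horth k, zero_dotProduct, add_zero]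
  · rw [← vecMul_vecMul, horth k, zero_vecMul]

end
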